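/- arXiv:1707.07748 — 2 statements merged into one kernel-verified Lean document; each statement's English description precedes it below -/
import Mathlib

section
/- Let p > q be distinct primes and G₁ = {(x₁,y₁,z₁,x₂,y₂,z₂) ∈ G×G : q·x₁ = p·x₂ and q·y₁ = p·y₂}, Γ₁ = G₁ ∩ (Γ×Γ). Then D = {(0,0,z,0,0,z) : z ∈ ℝ} is a closed subgroup of G₁ contained in the center of G₁; the image of Γ₁ under the quotient homomorphism G₁ → G₁/D is a discrete subgroup of G₁/D; and the quotient of G₁/D by this image subgroup is compact. -/
noncomputable section
open Filter

/-- The generalized Heisenberg group: `ℝ³` with multiplication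
`(x,y,z)·(x',y',z') = (x+x', y+y', z+z'+c(xy'−x'y))`.
The Heisenberg group `G` of the paper is `Heis 1`. -/
@[ext]
structure Heis (c : ℤ) where
  x : ℝ
  y : ℝ
  z : ℝ

namespace Heis
variable {c : ℤ}
instance : Mul (Heis c) :=
  ⟨fun a b => ⟨a.x + b.x, a.y + b.y, a.z + b.z + (c : ℝ) * (a.x * b.y - b.x * a.y)⟩⟩
instance : One (Heis c) := ⟨⟨0, 0, 0⟩⟩
instance : Inv (Heis c) := ⟨fun a => ⟨-a.x, -a.y, -a.z⟩⟩
lemma mul_def (a b : Heis c) :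
    a * b = ⟨a.x + b.x, a.y + b.y, a.z + b.z + (c : ℝ) * (a.x * b.y - b.x * a.y)⟩ := rfl
lemma one_def : (1 : Heis c) = ⟨0, 0, 0⟩ := rfl
lemma inv_def (a : Heis c) : a⁻¹ = ⟨-a.x, -a.y, -a.z⟩ := rfl
instance : Group (Heis c) where
  mul_assoc a b d := by ext <;> simp [mul_def] <;> ring
  one_mul a := by ext <;> simp [mul_def, one_def]
  mul_one a := by ext <;> simp [mul_def, one_def]
  inv_mul_cancel a := by ext <;> simp [mul_def, one_def, inv_def] <;> ring
/-- The topology of `Heis c`, induced from `ℝ³`. -/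
instance : TopologicalSpace (Heis c) :=
  TopologicalSpace.induced (fun a => (a.x, a.y, a.z)) inferInstance
/-- The lattice of integer points of `Heis c`  (the subgroup `Γ` when `c = 1`). -/
def latt (c : ℤ) : Subgroup (Heis c) where
  carrier := {a | ∃ m n k : ℤ, a = ⟨(m : ℝ), (n : ℝ), (k : ℝ)⟩}
  one_mem' := ⟨0, 0, 0, by ext <;> simp [one_def]⟩
  mul_mem' := by
    rintro a b ⟨m, n, k, rfl⟩ ⟨m', n', k', rfl⟩
    exact ⟨m + m', n + n', k + k' + c * (m * n' - m' * n), by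
      ext <;> simp [mul_def] <;> push_cast <;> ring⟩
  inv_mem' := by
    rintro a ⟨m, n, k, rfl⟩
    exact ⟨-m, -n, -k, by ext <;> simp [inv_def]⟩
end Heis

/-- The 3-dimensional Heisenberg nilmanifold `X = G/Γ` (the space of left cosets,
with the quotient topology). -/
abbrev HeisX : Type := Heis 1 ⧸ Heis.latt 1

/-- The circle `𝕋¹ = ℝ/ℤ`. -/
abbrev T1 : Type := AddCircle (1 : ℝ)

/-- The subgroup `G₁ = {(x₁,y₁,z₁,x₂,y₂,z₂) ∈ G×G : q(x₁,y₁) = p(x₂,y₂)}` of `G × G`. -/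
def HeisG1 (p q : ℕ) : Subgroup (Heis 1 × Heis 1) where
  carrier := {g | (q : ℝ) * g.1.x = (p : ℝ) * g.2.x ∧ (q : ℝ) * g.1.y = (p : ℝ) * g.2.y}
  one_mem' := by simp [Heis.one_def, Prod.fst_one, Prod.snd_one]
  mul_mem' := by
    rintro a b ⟨ha1, ha2⟩ ⟨hb1, hb2⟩
    constructor <;> simp only [Prod.fst_mul, Prod.snd_mul, Heis.mul_def] <;> ring_nf <;>
      nlinarith [ha1, ha2, hb1, hb2]
  inv_mem' := by
    rintro a ⟨ha1, ha2⟩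
    constructor <;> simp only [Prod.fst_inv, Prod.snd_inv, Heis.inv_def] <;> nlinarith [ha1, ha2]

/-- The subgroup `D = {(0,0,z,0,0,z) : z ∈ ℝ}` of `G₁`. -/
def HeisD (p q : ℕ) : Subgroup (HeisG1 p q) where
  carrier := {g | (g : Heis 1 × Heis 1).1.x = 0 ∧ (g : Heis 1 × Heis 1).1.y = 0 ∧
    (g : Heis 1 × Heis 1).2.x = 0 ∧ (g : Heis 1 × Heis 1).2.y = 0 ∧
    (g : Heis 1 × Heis 1).1.z = (g : Heis 1 × Heis 1).2.z}
  one_mem' := by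
    simp [Heis.one_def, Prod.fst_one, Prod.snd_one]
  mul_mem' := by
    rintro a b ⟨ha1, ha2, ha3, ha4, ha5⟩ ⟨hb1, hb2, hb3, hb4, hb5⟩
    refine ⟨?_, ?_, ?_, ?_, ?_⟩ <;>
      simp only [Subgroup.coe_mul, Prod.fst_mul, Prod.snd_mul, Heis.mul_def,
        ha1, ha2, ha3, ha4, ha5, hb1, hb2, hb3, hb4, hb5] <;> ring
  inv_mem' := by
    rintro a ⟨ha1, ha2, ha3, ha4, ha5⟩
    refine ⟨?_, ?_, ?_, ?_, ?_⟩ <;>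
      simp only [Subgroup.coe_inv, Prod.fst_inv, Prod.snd_inv, Heis.inv_def,
        ha1, ha2, ha3, ha4, ha5] <;> ring

instance (p q : ℕ) : (HeisD p q).Normal := by
  constructor
  intro n hn g
  obtain ⟨h1, h2, h3, h4, h5⟩ := hn
  refine ⟨?_, ?_, ?_, ?_, ?_⟩ <;>
    simp only [Subgroup.coe_mul, Subgroup.coe_inv, Prod.fst_mul, Prod.snd_mul,
      Prod.fst_inv, Prod.snd_inv, Heis.mul_def, Heis.inv_def, h1, h2, h3, h4, h5] <;> ring

/-! The functions `x₁, y₁, x₂, y₂, z₁ - z₂` on `G₁` separate exactly the cosets of `D`, so they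
embed `G₁/D` continuously and injectively into `ℝ⁵`. Since they take integer values on `Γ₁`, the
image of `Γ₁` is discrete. For cocompactness, a solution of `q x₁ = p x₂` is a multiple `s (p, q)`,
and subtracting the integral solution `⌊s⌋ (p, q)` leaves a bounded one; once the `x` and `y`
coordinates have been reduced in this way, the central coordinates are reduced modulo `1`. -/

section Quotient

variable {G Y : Type*} [Group G] [TopologicalSpace G] [TopologicalSpace Y] {Γ N : Subgroup G}

lemma compactSpace_quotient_of_isCompact {K : Set G} (hK : IsCompact K)
    (hΓK : ∀ g, ∃ γ ∈ Γ, g * γ ∈ K) : CompactSpace (G ⧸ Γ) := by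
  have hsurj : ((↑) : G → G ⧸ Γ) '' K = Set.univ := by
    refine Set.eq_univ_of_forall fun w ↦ ?_
    obtain ⟨g, rfl⟩ := QuotientGroup.mk_surjective w
    obtain ⟨γ, hγ, hgγ⟩ := hΓK g
    exact ⟨g * γ, hgγ, QuotientGroup.mk_mul_of_mem g hγ⟩
  exact isCompact_univ_iff.mp (hsurj ▸ hK.image continuous_quot_mk)

lemma compactSpace_quotient_map_mk_of_isCompact [N.Normal] {K : Set G} (hK : IsCompact K)
    (hΓK : ∀ g, ∃ γ ∈ Γ, g * γ ∈ K) :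
    CompactSpace ((G ⧸ N) ⧸ Γ.map (QuotientGroup.mk' N)) := by
  refine compactSpace_quotient_of_isCompact (hK.image (f := QuotientGroup.mk' N)
    continuous_quot_mk) fun w ↦ ?_
  obtain ⟨g, rfl⟩ := QuotientGroup.mk'_surjective N w
  obtain ⟨γ, hγ, hgγ⟩ := hΓK g
  exact ⟨_, Subgroup.mem_map_of_mem _ hγ, g * γ, hgγ, map_mul _ g γ⟩

lemma discreteTopology_map_mk_of_mapsTo [N.Normal] {f : G → Y} (hf : Continuous f)
    (hfN : ∀ a b, f a = f b ↔ a⁻¹ * b ∈ N) {t : Set Y} [DiscreteTopology t]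
    (hΓt : Set.MapsTo f Γ t) : DiscreteTopology (Γ.map (QuotientGroup.mk' N)) := by
  let F : G ⧸ N → Y := Quotient.lift f fun a b hab ↦
    (hfN a b).mpr (QuotientGroup.leftRel_apply.mp hab)
  have hF : Continuous F := hf.quotient_lift _
  have hF_inj : F.Injective := by
    intro v w hvw
    obtain ⟨a, rfl⟩ := QuotientGroup.mk_surjective v
    obtain ⟨b, rfl⟩ := QuotientGroup.mk_surjective w
    exact QuotientGroup.eq.mpr ((hfN a b).mp hvw)
  have hsub : (Γ.map (QuotientGroup.mk' N) : Set (G ⧸ N)) ⊆ F ⁻¹' t := by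
    rintro _ ⟨γ, hγ, rfl⟩
    exact hΓt hγ
  have := DiscreteTopology.preimage_of_continuous_injective t hF hF_inj
  exact DiscreteTopology.of_subset this hsub

end Quotient

/-- The integer points of `ℝ^ι`. -/
def integerPoints (ι : Type*) : Set (ι → ℝ) :=
  Set.univ.pi fun _ ↦ Set.range ((↑) : ℤ → ℝ)

instance (ι : Type*) [Finite ι] : DiscreteTopology (integerPoints ι) := by
  have hemb : Topology.IsEmbedding (Pi.map fun (_ : ι) (n : ℤ) ↦ (n : ℝ)) :=
    .piMap fun _ ↦ Int.isClosedEmbedding_coe_real.isEmbedding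
  rw [integerPoints, ← Set.range_piMap]
  exact hemb.isInducing.isDiscrete_range.to_subtype

lemma exists_mul_eq_of_mul_eq_mul {k : Type*} [Field k] {p q x₁ x₂ : k}
    (hpq : ¬(p = 0 ∧ q = 0)) (h : q * x₁ = p * x₂) : ∃ s, x₁ = p * s ∧ x₂ = q * s := by
  by_cases hp : p = 0
  · have hq : q ≠ 0 := fun hq ↦ hpq ⟨hp, hq⟩
    have hx₁ : x₁ = 0 := by simpa [hp, hq] using h
    exact ⟨x₂ / q, by simp [hp, hx₁], by field_simp⟩
  · exact ⟨x₁ / p, by field_simp, by field_simp; linear_combination -h⟩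

lemma exists_int_mul_eq_mul_add_mem_Icc (p q : ℕ) {x₁ x₂ : ℝ} (h : q * x₁ = p * x₂) :
    ∃ m₁ m₂ : ℤ, (q : ℝ) * m₁ = p * m₂ ∧
      x₁ + m₁ ∈ Set.Icc (0 : ℝ) (p + 1) ∧ x₂ + m₂ ∈ Set.Icc (0 : ℝ) (q + 1) := by
  by_cases hpq : (p : ℝ) = 0 ∧ (q : ℝ) = 0
  · have hfract (x : ℝ) : x + (-⌊x⌋ : ℤ) ∈ Set.Icc (0 : ℝ) (0 + 1) := by
      constructor <;> push_cast <;> linarith [Int.floor_le x, Int.lt_floor_add_one x]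
    refine ⟨-⌊x₁⌋, -⌊x₂⌋, by simp [hpq], ?_, ?_⟩
    · simpa only [hpq.1] using hfract x₁
    · simpa only [hpq.2] using hfract x₂
  · obtain ⟨s, rfl, rfl⟩ := exists_mul_eq_of_mul_eq_mul hpq h
    have hfract (r : ℕ) : r * s + (-(r * ⌊s⌋) : ℤ) ∈ Set.Icc (0 : ℝ) (r + 1) := by
      have hr : (r : ℝ) * s + (-(r * ⌊s⌋) : ℤ) = r * Int.fract s := by
        rw [← Int.self_sub_floor]; push_cast; ring
      rw [hr]
      exact ⟨by positivity,
        (mul_le_of_le_one_right r.cast_nonneg (Int.fract_lt_one s).le).trans (by linarith)⟩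
    exact ⟨-(p * ⌊s⌋), -(q * ⌊s⌋), by push_cast; ring, hfract p, hfract q⟩

namespace Heis

variable {c : ℤ}

/-- The coordinates of `Heis c` as a homeomorphism onto `ℝ³`. -/
def coordsHomeomorph (c : ℤ) : Heis c ≃ₜ ℝ × ℝ × ℝ where
  toFun a := (a.x, a.y, a.z)
  invFun v := ⟨v.1, v.2.1, v.2.2⟩
  continuous_toFun := continuous_induced_dom
  continuous_invFun := continuous_induced_rng.mpr continuous_id

@[fun_prop]
lemma continuous_x : Continuous (x : Heis c → ℝ) :=
  continuous_fst.comp (coordsHomeomorph c).continuous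

@[fun_prop]
lemma continuous_y : Continuous (y : Heis c → ℝ) :=
  (continuous_fst.comp continuous_snd).comp (coordsHomeomorph c).continuous

@[fun_prop]
lemma continuous_z : Continuous (z : Heis c → ℝ) :=
  (continuous_snd.comp continuous_snd).comp (coordsHomeomorph c).continuous

lemma isCompact_setOf_coords_mem {A B C : Set ℝ} (hA : IsCompact A) (hB : IsCompact B)
    (hC : IsCompact C) : IsCompact {a : Heis c | a.x ∈ A ∧ a.y ∈ B ∧ a.z ∈ C} :=
  (coordsHomeomorph c).isClosedEmbedding.isCompact_preimage (hA.prod (hB.prod hC))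

lemma mul_comm_of_x_eq_zero_of_y_eq_zero {a : Heis c} (hx : a.x = 0) (hy : a.y = 0)
    (b : Heis c) : b * a = a * b := by
  ext <;> simp [mul_def, hx, hy, add_comm]

lemma exists_mem_latt_mul_z_mem_Icc (a : Heis c) (m n : ℤ) :
    ∃ γ ∈ latt c, γ.x = m ∧ γ.y = n ∧ (a * γ).z ∈ Set.Icc (0 : ℝ) 1 := by
  set r : ℝ := a.z + c * (a.x * n - m * a.y) with hr
  refine ⟨⟨m, n, (-⌊r⌋ : ℤ)⟩, ⟨m, n, -⌊r⌋, rfl⟩, rfl, rfl, ?_⟩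
  have hz : (a * ⟨m, n, (-⌊r⌋ : ℤ)⟩ : Heis c).z = Int.fract r := by
    rw [← Int.self_sub_floor, mul_def]; push_cast; linear_combination -hr
  exact hz ▸ ⟨Int.fract_nonneg r, (Int.fract_lt_one r).le⟩

end Heis

namespace HeisG1

variable (p q : ℕ)

/-- The subgroup `Γ₁ = G₁ ∩ (Γ × Γ)` of `G₁`. -/
abbrev latt : Subgroup (HeisG1 p q) :=
  ((Heis.latt 1).prod (Heis.latt 1)).subgroupOf (HeisG1 p q)

/-- The coordinates `x₁, y₁, x₂, y₂, z₁ - z₂` on `G₁`, which are constant on the cosets of `D`. -/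
def cosetCoords (g : HeisG1 p q) : Fin 5 → ℝ :=
  ![g.1.1.x, g.1.1.y, g.1.2.x, g.1.2.y, g.1.1.z - g.1.2.z]

lemma continuous_cosetCoords : Continuous (cosetCoords p q) := by
  unfold cosetCoords
  fun_prop

lemma cosetCoords_eq_iff (a b : HeisG1 p q) :
    cosetCoords p q a = cosetCoords p q b ↔ a⁻¹ * b ∈ HeisD p q := by
  change _ ↔ (_ ∧ _ ∧ _ ∧ _ ∧ _)
  simp only [cosetCoords, Matrix.vecCons_inj, and_true, Subgroup.coe_mul, Subgroup.coe_inv,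
    Prod.fst_mul, Prod.snd_mul, Prod.fst_inv, Prod.snd_inv, Heis.mul_def, Heis.inv_def,
    neg_add_eq_zero]
  refine and_congr_right fun hx₁ ↦ and_congr_right fun hy₁ ↦ and_congr_right fun hx₂ ↦
    and_congr_right fun hy₂ ↦ ?_
  rw [hx₁, hy₁, hx₂, hy₂]
  constructor <;> intro h <;> linarith

lemma mapsTo_cosetCoords_latt :
    Set.MapsTo (cosetCoords p q) (latt p q) (integerPoints (Fin 5)) := by
  rintro ⟨⟨_, _⟩, _⟩ ⟨⟨m₁, n₁, k₁, rfl⟩, ⟨m₂, n₂, k₂, rfl⟩⟩ i -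
  refine ⟨![m₁, n₁, m₂, n₂, k₁ - k₂] i, ?_⟩
  fin_cases i <;> simp [cosetCoords]

lemma isClosed : IsClosed (HeisG1 p q : Set (Heis 1 × Heis 1)) :=
  (isClosed_eq (by fun_prop) (by fun_prop)).inter (isClosed_eq (by fun_prop) (by fun_prop))

/-- A compact subset of `G₁` that meets every left coset of `Γ₁`. The bounds `p + 1` and `q + 1`
also cover `p = q = 0`, where the unit cube is needed. -/
def box : Set (HeisG1 p q) :=
  Subtype.val ⁻¹' ({a | a.x ∈ Set.Icc (0 : ℝ) (p + 1) ∧ a.y ∈ Set.Icc (0 : ℝ) (p + 1) ∧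
      a.z ∈ Set.Icc (0 : ℝ) 1} ×ˢ
    {a | a.x ∈ Set.Icc (0 : ℝ) (q + 1) ∧ a.y ∈ Set.Icc (0 : ℝ) (q + 1) ∧
      a.z ∈ Set.Icc (0 : ℝ) 1})

lemma isCompact_box : IsCompact (box p q) :=
  (isClosed p q).isClosedEmbedding_subtypeVal.isCompact_preimage
    ((Heis.isCompact_setOf_coords_mem isCompact_Icc isCompact_Icc isCompact_Icc).prod
      (Heis.isCompact_setOf_coords_mem isCompact_Icc isCompact_Icc isCompact_Icc))

lemma exists_mem_latt_mul_mem_box (g : HeisG1 p q) : ∃ γ ∈ latt p q, g * γ ∈ box p q := by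
  obtain ⟨⟨a, b⟩, hx, hy⟩ := g
  obtain ⟨m₁, m₂, hm, hxm₁, hxm₂⟩ := exists_int_mul_eq_mul_add_mem_Icc p q hx
  obtain ⟨n₁, n₂, hn, hyn₁, hyn₂⟩ := exists_int_mul_eq_mul_add_mem_Icc p q hy
  obtain ⟨γ₁, hγ₁, hγx₁, hγy₁, hz₁⟩ := Heis.exists_mem_latt_mul_z_mem_Icc a m₁ n₁
  obtain ⟨γ₂, hγ₂, hγx₂, hγy₂, hz₂⟩ := Heis.exists_mem_latt_mul_z_mem_Icc b m₂ n₂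
  have hγ : (γ₁, γ₂) ∈ HeisG1 p q :=
    ⟨by simpa only [hγx₁, hγx₂] using hm, by simpa only [hγy₁, hγy₂] using hn⟩
  rw [← hγx₁] at hxm₁
  rw [← hγx₂] at hxm₂
  rw [← hγy₁] at hyn₁
  rw [← hγy₂] at hyn₂
  exact ⟨⟨(γ₁, γ₂), hγ⟩, ⟨hγ₁, hγ₂⟩, ⟨hxm₁, hyn₁, hz₁⟩, hxm₂, hyn₂, hz₂⟩

end HeisG1

namespace HeisD

variable (p q : ℕ)

lemma isClosed : IsClosed (HeisD p q : Set (HeisG1 p q)) := by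
  have hfiber : (HeisD p q : Set (HeisG1 p q)) =
      HeisG1.cosetCoords p q ⁻¹' {HeisG1.cosetCoords p q 1} := by
    ext g
    simp [eq_comm (b := HeisG1.cosetCoords p q 1), HeisG1.cosetCoords_eq_iff]
  exact hfiber ▸ isClosed_singleton.preimage (HeisG1.continuous_cosetCoords p q)

lemma le_center : HeisD p q ≤ Subgroup.center (HeisG1 p q) := by
  rintro d ⟨hx₁, hy₁, hx₂, hy₂, -⟩
  exact Subgroup.mem_center_iff.mpr fun g ↦ Subtype.ext <| Prod.ext
    (Heis.mul_comm_of_x_eq_zero_of_y_eq_zero hx₁ hy₁ _)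
    (Heis.mul_comm_of_x_eq_zero_of_y_eq_zero hx₂ hy₂ _)

end HeisD

theorem stmt5_general (p q : ℕ) :
    IsClosed (HeisD p q : Set (HeisG1 p q)) ∧
    HeisD p q ≤ Subgroup.center (HeisG1 p q) ∧
    DiscreteTopology ((HeisG1.latt p q).map (QuotientGroup.mk' (HeisD p q))) ∧
    CompactSpace
      ((HeisG1 p q ⧸ HeisD p q) ⧸ (HeisG1.latt p q).map (QuotientGroup.mk' (HeisD p q))) :=
  ⟨HeisD.isClosed p q, HeisD.le_center p q,
    discreteTopology_map_mk_of_mapsTo (HeisG1.continuous_cosetCoords p q)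
      (HeisG1.cosetCoords_eq_iff p q) (HeisG1.mapsTo_cosetCoords_latt p q),
    compactSpace_quotient_map_mk_of_isCompact (HeisG1.isCompact_box p q)
      (HeisG1.exists_mem_latt_mul_mem_box p q)⟩

/-- `D = {(0,0,z,0,0,z) : z ∈ ℝ}` is a closed subgroup of `G₁` contained
in the center of `G₁`; the image of `Γ₁ = G₁ ∩ (Γ×Γ)` under the quotient homomorphism
`G₁ → G₁/D` is discrete, and the quotient of `G₁/D` by this image is compact. -/
theorem stmt5 (p q : ℕ) (hp : p.Prime) (hq : q.Prime) (hpq : q < p) :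
    IsClosed ((HeisD p q : Subgroup (HeisG1 p q)) : Set (HeisG1 p q)) ∧
    HeisD p q ≤ Subgroup.center (HeisG1 p q) ∧
    DiscreteTopology
      (Subgroup.map (QuotientGroup.mk' (HeisD p q))
        (((Heis.latt 1).prod (Heis.latt 1)).subgroupOf (HeisG1 p q))) ∧
    CompactSpace
      ((HeisG1 p q ⧸ HeisD p q) ⧸
        Subgroup.map (QuotientGroup.mk' (HeisD p q))
          (((Heis.latt 1).prod (Heis.latt 1)).subgroupOf (HeisG1 p q))) :=
  stmt5_general p q
end
end

section
/- T is uniquely ergodic (there is exactly one T-invariant Borel probability measure on Ω) if and only if the product measure γ = γ₀ × m_{𝕋¹} is ergodic for T. -/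
noncomputable section
open MeasureTheory Filter

/-! An ergodic map is disjoint from the identity: a joining of `T` with an identity map whose
`T`-marginal is ergodic is a product measure. Now let `μ` be invariant under the skew product `T`
over `γ₀`. The fibre shear `(x, ζ, t) ↦ (x, t + ζ, t)` commutes with `T × id`, and it sends `μ × m`
to a joining of `T` with the identity whose `T`-marginal is the average of the rotated copies of
`μ`, that is `γ₀ × m`. If `γ₀ × m` is ergodic, the shear therefore sends `μ × m` to
`(γ₀ × m) × m`, whatever `μ` is. The shear being invertible, there is only one such `μ`. -/

theorem ergodic_of_unique_invariant {Ω : Type*} [MeasurableSpace Ω] {T : Ω → Ω}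
    {γ : Measure Ω} [IsProbabilityMeasure γ] (hγ : MeasurePreserving T γ γ)
    (huniq : ∀ ν : Measure Ω, IsProbabilityMeasure ν → MeasurePreserving T ν ν → ν = γ) :
    Ergodic T γ := by
  refine .of_mem_extremePoints (mem_extremePoints_iff_left.mpr ⟨⟨hγ, inferInstance⟩, ?_⟩)
  rintro ν ⟨hν, hνprob⟩ _ _ _
  exact huniq ν hνprob hν

section Joinings

variable {Ω P : Type*} [MeasurableSpace Ω] [MeasurableSpace P] {T : Ω → Ω}

theorem measurePreserving_fst_restrict_of_joining_id {ρ : Measure (Ω × P)} (hT : Measurable T)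
    (hρ : MeasurePreserving (Prod.map T id) ρ ρ) {B : Set P} (hB : MeasurableSet B) :
    MeasurePreserving T (ρ.restrict (Prod.snd ⁻¹' B)).fst (ρ.restrict (Prod.snd ⁻¹' B)).fst :=
  (measurable_fst.measurePreserving _).of_semiconj
    (hρ.restrict_preimage (measurable_snd hB)) (fun _ => rfl) hT

theorem eq_prod_of_ergodic_fst_of_joining_id {ρ : Measure (Ω × P)} [IsProbabilityMeasure ρ]
    (hT : Ergodic T ρ.fst) (hρ : MeasurePreserving (Prod.map T id) ρ ρ) :
    ρ = ρ.fst.prod ρ.snd := by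
  refine Measure.ext_prod fun {A B} hA hB => ?_
  set ν : Measure Ω := (ρ.restrict (Prod.snd ⁻¹' B)).fst with hν_def
  have hν_apply {E : Set Ω} (hE : MeasurableSet E) : ν E = ρ (E ×ˢ B) := by
    rw [hν_def, Measure.fst_apply hE, Measure.restrict_apply (measurable_fst hE), Set.prod_eq]
  have hν_le : ν ≤ ρ.fst := Measure.fst_mono Measure.restrict_le_self
  obtain ⟨c, hc⟩ := hT.eq_smul_of_absolutelyContinuous
    (measurePreserving_fst_restrict_of_joining_id hT.measurable hρ hB) hν_le.absolutelyContinuous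
  have hcB : c = ρ.snd B := calc
    c = ν Set.univ := by simp [hν_def, hc]
    _ = ρ.snd B := by rw [hν_apply .univ, Set.univ_prod, Measure.snd_apply hB]
  calc
    ρ (A ×ˢ B) = ν A := (hν_apply hA).symm
    _ = c * ρ.fst A := by rw [hν_def, hc, Measure.smul_apply, smul_eq_mul]
    _ = ρ.fst.prod ρ.snd (A ×ˢ B) := by rw [hcB, Measure.prod_prod, mul_comm]

end Joinings

section SkewProduct

variable {Ω₀ G : Type*} [Add G] [MeasurableSpace Ω₀] [MeasurableSpace G]
  {T₀ : Ω₀ → Ω₀} {g : Ω₀ → G} {γ₀ : Measure Ω₀} {m : Measure G} {μ : Measure (Ω₀ × G)}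

/-- The skew product over `T₀` with cocycle `g`, acting on the fibre `G` by translations on the
right. -/
def skewProduct (T₀ : Ω₀ → Ω₀) (g : Ω₀ → G) (ω : Ω₀ × G) : Ω₀ × G :=
  (T₀ ω.1, ω.2 + g ω.1)

theorem measurePreserving_fst_of_skewProduct (hT₀ : Measurable T₀)
    (hμ : MeasurePreserving (skewProduct T₀ g) μ μ) : MeasurePreserving T₀ μ.fst μ.fst :=
  (measurable_fst.measurePreserving μ).of_semiconj hμ (fun _ => rfl) hT₀

variable [MeasurableAdd₂ G]

theorem measurable_skewProduct (hT₀ : Measurable T₀) (hg : Measurable g) :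
    Measurable (skewProduct T₀ g) := by
  unfold skewProduct
  fun_prop

theorem measurePreserving_skewProduct [SFinite γ₀] [SFinite m] [m.IsAddRightInvariant]
    (hT₀ : MeasurePreserving T₀ γ₀ γ₀) (hg : Measurable g) :
    MeasurePreserving (skewProduct T₀ g) (γ₀.prod m) (γ₀.prod m) :=
  hT₀.skew_product (g := fun x ζ => ζ + g x) (by fun_prop)
    (ae_of_all _ fun x => (measurePreserving_add_right m (g x)).map_eq)

end SkewProduct

section FibreShear

variable {Ω₀ G : Type*} [AddGroup G] [MeasurableSpace Ω₀] [MeasurableSpace G] [MeasurableAdd₂ G]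
  [MeasurableNeg G] {T₀ : Ω₀ → Ω₀} {g : Ω₀ → G} {γ₀ : Measure Ω₀} {m : Measure G}
  {μ : Measure (Ω₀ × G)}

/-- The automorphism `((x, ζ), t) ↦ ((x, t + ζ), t)`, which encodes all the left translations of the
fibre at once. They commute with every skew product, as skew products translate on the right. -/
def fibreShear (Ω₀ G : Type*) [AddGroup G] [MeasurableSpace Ω₀] [MeasurableSpace G]
    [MeasurableAdd₂ G] [MeasurableNeg G] : (Ω₀ × G) × G ≃ᵐ (Ω₀ × G) × G where
  toFun p := ((p.1.1, p.2 + p.1.2), p.2)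
  invFun p := ((p.1.1, -p.2 + p.1.2), p.2)
  left_inv p := by simp
  right_inv p := by simp
  measurable_toFun := by dsimp only [Equiv.coe_fn_mk]; fun_prop
  measurable_invFun := by dsimp only [Equiv.coe_fn_symm_mk]; fun_prop

theorem semiconj_fibreShear (T₀ : Ω₀ → Ω₀) (g : Ω₀ → G) :
    Function.Semiconj (fibreShear Ω₀ G) (Prod.map (skewProduct T₀ g) id)
      (Prod.map (skewProduct T₀ g) id) := fun p => by
  simp [fibreShear, skewProduct, add_assoc]

theorem snd_map_fibreShear (ρ : Measure ((Ω₀ × G) × G)) :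
    (ρ.map (fibreShear Ω₀ G)).snd = ρ.snd :=
  Measure.map_map measurable_snd (fibreShear Ω₀ G).measurable

theorem fst_map_fibreShear_prod [SFinite μ] [SFinite m] [m.IsAddRightInvariant] :
    ((μ.prod m).map (fibreShear Ω₀ G)).fst = μ.fst.prod m := by
  have h_translate : MeasurePreserving (fun p : (Ω₀ × G) × G => (p.1, p.2 + p.1.2))
      (μ.prod m) (μ.prod m) :=
    (MeasurePreserving.id μ).skew_product (g := fun ω t => t + ω.2) (by fun_prop)
      (ae_of_all _ fun ω => (measurePreserving_add_right m ω.2).map_eq)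
  have h_forget : MeasurePreserving (Prod.map Prod.fst id) (μ.prod m) (μ.fst.prod m) :=
    (measurable_fst.measurePreserving μ).prod (MeasurePreserving.id m)
  rw [Measure.fst, Measure.map_map measurable_fst (fibreShear Ω₀ G).measurable]
  exact (h_forget.comp h_translate).map_eq

variable [IsProbabilityMeasure m] [m.IsAddRightInvariant] [IsProbabilityMeasure μ]

theorem map_fibreShear_prod_of_ergodic (hμ : MeasurePreserving (skewProduct T₀ g) μ μ)
    (hμ_fst : μ.fst = γ₀) (herg : Ergodic (skewProduct T₀ g) (γ₀.prod m)) :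
    (μ.prod m).map (fibreShear Ω₀ G) = (γ₀.prod m).prod m := by
  set ρ := (μ.prod m).map (fibreShear Ω₀ G)
  have hρ_prob : IsProbabilityMeasure ρ :=
    Measure.isProbabilityMeasure_map (fibreShear Ω₀ G).measurable.aemeasurable
  have hρ : MeasurePreserving (Prod.map (skewProduct T₀ g) id) ρ ρ :=
    ((fibreShear Ω₀ G).measurable.measurePreserving _).of_semiconj
      (hμ.prod (MeasurePreserving.id m)) (semiconj_fibreShear T₀ g)
      (hμ.measurable.prodMap measurable_id)
  have hρ_fst : ρ.fst = γ₀.prod m := hμ_fst ▸ fst_map_fibreShear_prod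
  have hρ_snd : ρ.snd = m := (snd_map_fibreShear _).trans Measure.snd_prod
  rw [eq_prod_of_ergodic_fst_of_joining_id (hρ_fst ▸ herg) hρ, hρ_fst, hρ_snd]

theorem eq_prod_of_ergodic_skewProduct (hμ : MeasurePreserving (skewProduct T₀ g) μ μ)
    (hμ_fst : μ.fst = γ₀) (herg : Ergodic (skewProduct T₀ g) (γ₀.prod m)) :
    μ = γ₀.prod m := by
  have hγ₀_prob : IsProbabilityMeasure γ₀ := hμ_fst ▸ inferInstance
  have h_shear : (μ.prod m).map (fibreShear Ω₀ G) =
      ((γ₀.prod m).prod m).map (fibreShear Ω₀ G) :=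
    (map_fibreShear_prod_of_ergodic hμ hμ_fst herg).trans
      (map_fibreShear_prod_of_ergodic herg.toMeasurePreserving Measure.fst_prod herg).symm
  simpa only [Measure.fst_prod] using
    congrArg Measure.fst ((fibreShear Ω₀ G).map_measurableEquiv_injective h_shear)

end FibreShear

theorem stmt14_general {Ω₀ G : Type*} [MeasurableSpace Ω₀] [AddGroup G] [MeasurableSpace G]
    [MeasurableAdd₂ G] [MeasurableNeg G] (m : Measure G) [IsProbabilityMeasure m]
    [m.IsAddRightInvariant] {T₀ : Ω₀ → Ω₀} {γ₀ : Measure Ω₀} [IsProbabilityMeasure γ₀]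
    (hT₀ : MeasurePreserving T₀ γ₀ γ₀)
    (huniq : ∀ μ : Measure Ω₀, IsProbabilityMeasure μ → μ.map T₀ = μ → μ = γ₀)
    {g : Ω₀ → G} (hg : Measurable g) :
    (∃! μ : Measure (Ω₀ × G), IsProbabilityMeasure μ ∧ μ.map (skewProduct T₀ g) = μ) ↔
      Ergodic (skewProduct T₀ g) (γ₀.prod m) := by
  have hγ : MeasurePreserving (skewProduct T₀ g) (γ₀.prod m) (γ₀.prod m) :=
    measurePreserving_skewProduct hT₀ hg
  constructor
  · intro hμ
    exact ergodic_of_unique_invariant hγ fun ν hν_prob hν =>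
      hμ.unique ⟨hν_prob, hν.map_eq⟩ ⟨inferInstance, hγ.map_eq⟩
  · refine fun herg => ⟨γ₀.prod m, ⟨inferInstance, hγ.map_eq⟩, ?_⟩
    rintro μ ⟨hμ_prob, hμ_map⟩
    have hμ : MeasurePreserving (skewProduct T₀ g) μ μ :=
      ⟨measurable_skewProduct hT₀.measurable hg, hμ_map⟩
    have hμ_fst : μ.fst = γ₀ :=
      huniq _ inferInstance (measurePreserving_fst_of_skewProduct hT₀.measurable hμ).map_eq
    exact eq_prod_of_ergodic_skewProduct hμ hμ_fst herg

/-- Let `T₀ : Ω₀ → Ω₀` be a uniquely ergodic continuous map of a compact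
metric space, with unique invariant Borel probability measure `γ₀`, let `g : Ω₀ → 𝕋¹` be
Borel measurable and `T(ω₀,ζ) = (T₀ω₀, ζ + g(ω₀))` the skew product on `Ω = Ω₀ × 𝕋¹`.
Then `T` is uniquely ergodic if and only if the product measure `γ = γ₀ × m_{𝕋¹}` is
ergodic for `T`. -/
theorem stmt14
    {Ω₀ : Type*} [MetricSpace Ω₀] [CompactSpace Ω₀] [MeasurableSpace Ω₀] [BorelSpace Ω₀]
    (T₀ : Ω₀ → Ω₀) (hT₀ : Continuous T₀)
    (γ₀ : Measure Ω₀) (hprob : IsProbabilityMeasure γ₀) (hinv : γ₀.map T₀ = γ₀)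
    (huniq : ∀ μ : Measure Ω₀, IsProbabilityMeasure μ → μ.map T₀ = μ → μ = γ₀)
    (g : Ω₀ → T1) (hg : Measurable g) :
    (∃! μ : Measure (Ω₀ × T1), IsProbabilityMeasure μ ∧
        μ.map (fun ω : Ω₀ × T1 => (T₀ ω.1, ω.2 + g ω.1)) = μ) ↔
      Ergodic (fun ω : Ω₀ × T1 => (T₀ ω.1, ω.2 + g ω.1)) (γ₀.prod volume) := by
  have : IsProbabilityMeasure (volume : Measure T1) := ⟨UnitAddCircle.measure_univ⟩
  exact stmt14_general volume ⟨hT₀.measurable, hinv⟩ huniq hg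
end
end
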